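/- arXiv:2201.01345 — 6 statements merged into one kernel-verified Lean document; each statement's English description precedes it below -/
import Mathlib

section
/- (Theorem 3) Let F be a field, D a finite-dimensional division algebra over F whose center is F, R a commutative F-algebra, and D_R = D ⊗_F R. Then every semiprime D_R-submodule N of (D_R)^n equals the intersection of all prime D_R-submodules of (D_R)^n containing N (the empty intersection being all of (D_R)^n). -/
open TensorProduct

/-- A submodule `N` of `A^n` is *semiprime* if for every `f ∈ A^n` such that
`(f j * a) • f ∈ N` for every `a ∈ A` and every coordinate `j`, one has `f ∈ N`. -/
def Submodule.IsSemiprimeSubmodule {A : Type*} [Ring A] {n : ℕ}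
    (N : Submodule A (Fin n → A)) : Prop :=
  ∀ f : Fin n → A, (∀ (j : Fin n) (a : A), (f j * a) • f ∈ N) → f ∈ N

/-- A submodule `N` of a module `M` is *prime* if for every scalar `a` and `m ∈ M` with
`(a * x) • m ∈ N` for all `x`, either `a • M ⊆ N` or `m ∈ N`. -/
def Submodule.IsPrimeSubmodule {A : Type*} [Ring A] {M : Type*} [AddCommGroup M] [Module A M]
    (N : Submodule A M) : Prop :=
  ∀ (a : A) (m : M), (∀ x : A, (a * x) • m ∈ N) → (∀ m' : M, a • m' ∈ N) ∨ m ∈ N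

namespace SPT

set_option linter.unusedSectionVars false

variable {F : Type*} [Field F] {D : Type*} [DivisionRing D] [Algebra F D]

/-- Jacobson density: every `F`-endomorphism of `D` is a sum of two-sided multiplications. -/
lemma mulLeftRight_surj [FiniteDimensional F D] [Algebra.IsCentral F D] (T : Module.End F D) :
    ∃ z : D ⊗[F] Dᵐᵒᵖ, AlgHom.mulLeftRight F D z = T := by
  let S := (AlgHom.mulLeftRight F D).range
  have hact : ∀ (s : S) (d : D), s • d = (s : Module.End F D) d := fun s d => rfl
  have hsimple : IsSimpleModule S D := by
    rw [isSimpleModule_iff_toSpanSingleton_surjective]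
    refine ⟨inferInstance, fun x hx y => ?_⟩
    refine ⟨⟨AlgHom.mulLeftRight F D ((y * x⁻¹) ⊗ₜ 1), ⟨_, rfl⟩⟩, ?_⟩
    simp [LinearMap.toSpanSingleton_apply, hact, hx]
  have hend : ∀ φ : Module.End S D, ∃ c : F, ∀ d, φ d = c • d := by
    intro φ
    have hl : ∀ x d, φ (x * d) = x * φ d := by
      intro x d
      have := φ.map_smul ⟨AlgHom.mulLeftRight F D (x ⊗ₜ 1), ⟨_, rfl⟩⟩ d
      simpa [hact] using this
    have hr : ∀ x d, φ (d * x) = φ d * x := by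
      intro x d
      have := φ.map_smul ⟨AlgHom.mulLeftRight F D (1 ⊗ₜ MulOpposite.op x), ⟨_, rfl⟩⟩ d
      simpa [hact] using this
    have hc : φ 1 ∈ Subalgebra.center F D := by
      rw [Subalgebra.mem_center_iff]
      intro x
      rw [← hl, ← hr, mul_one, one_mul]
    rw [Algebra.IsCentral.center_eq_bot, Algebra.mem_bot] at hc
    obtain ⟨c, hc⟩ := hc
    refine ⟨c, fun d => ?_⟩
    have := hr d 1
    rw [one_mul, ← hc] at this
    rw [this, Algebra.smul_def]
  let f : Module.End (Module.End S D) D :=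
    { toFun := T
      map_add' := T.map_add
      map_smul' := by
        intro φ d
        obtain ⟨c, hc⟩ := hend φ
        simp [hc] }
  classical
  let b := Module.finBasis F D
  obtain ⟨r, hr⟩ := jacobson_density (R := S) (M := D) f (Finset.univ.image b)
  obtain ⟨z, hz⟩ := r.2
  refine ⟨z, ?_⟩
  apply b.ext
  intro i
  have h := hr (b i) (by simp)
  rw [hact, ← hz] at h
  exact h.symm

variable {R : Type*} [CommRing R] [Algebra F R]

lemma rTensor_mem [FiniteDimensional F D] [Algebra.IsCentral F D] (T : Module.End F D)
    (C : AddSubgroup (D ⊗[F] R)) (hl : ∀ x, ∀ y ∈ C, x * y ∈ C) (hr : ∀ x, ∀ y ∈ C, y * x ∈ C)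
    (a : D ⊗[F] R) (ha : a ∈ C) : LinearMap.rTensor R T a ∈ C := by
  obtain ⟨z, rfl⟩ := mulLeftRight_surj T
  induction z using TensorProduct.induction_on with
  | zero => simp
  | add x y hx hy =>
    rw [map_add, LinearMap.rTensor_add, LinearMap.add_apply]
    exact C.add_mem hx hy
  | tmul x y =>
    have : LinearMap.rTensor R (AlgHom.mulLeftRight F D (x ⊗ₜ y)) a
        = (x ⊗ₜ 1) * a * (y.unop ⊗ₜ 1) := by
      clear ha
      induction a using TensorProduct.induction_on with
      | zero => simp
      | add u v hu hv => rw [map_add, hu, hv, mul_add, add_mul]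
      | tmul d r => simp
    rw [this]
    exact hr _ _ (hl _ _ ha)

/-- The central embedding of `R`. -/
noncomputable def ι (F D R : Type*) [Field F] [DivisionRing D] [Algebra F D] [CommRing R]
    [Algebra F R] : R →ₐ[F] D ⊗[F] R := Algebra.TensorProduct.includeRight

lemma ι_comm (r : R) (a : D ⊗[F] R) : ι F D R r * a = a * ι F D R r := by
  induction a using TensorProduct.induction_on with
  | zero => simp
  | add u v hu hv => rw [mul_add, add_mul, hu, hv]
  | tmul d s => simp [ι, mul_comm]

variable {κ : Type*} [Fintype κ] (b : Module.Basis κ F D)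

/-- Coefficients with respect to a basis of `D`. -/
noncomputable def coef (i : κ) : D ⊗[F] R →ₗ[F] R :=
  (TensorProduct.lid F R).toLinearMap ∘ₗ LinearMap.rTensor R (b.coord i)

lemma coef_ι_mul (i : κ) (r : R) (a : D ⊗[F] R) :
    coef b i (ι F D R r * a) = r * coef b i a := by
  induction a using TensorProduct.induction_on with
  | zero => simp
  | add u v hu hv => rw [mul_add, map_add, hu, hv, map_add, mul_add]
  | tmul d s => simp [ι, coef]

lemma coef_mul_ι (i : κ) (r : R) (a : D ⊗[F] R) :
    coef b i (a * ι F D R r) = r * coef b i a := by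
  rw [← ι_comm, coef_ι_mul]

lemma sum_coef (a : D ⊗[F] R) : ∑ i, (b i ⊗ₜ[F] (1 : R)) * ι F D R (coef b i a) = a := by
  induction a using TensorProduct.induction_on with
  | zero => simp
  | add u v hu hv => simp only [map_add, mul_add, Finset.sum_add_distrib, hu, hv]
  | tmul d s =>
    have : ∀ i, (b i ⊗ₜ[F] (1 : R)) * ι F D R (coef b i (d ⊗ₜ s)) = (b.repr d i • b i) ⊗ₜ s := by
      intro i
      simp [ι, coef, TensorProduct.smul_tmul]
    simp only [this, ← TensorProduct.sum_tmul, b.sum_repr]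

lemma coef_mem [FiniteDimensional F D] [Algebra.IsCentral F D]
    (C : AddSubgroup (D ⊗[F] R)) (hl : ∀ x, ∀ y ∈ C, x * y ∈ C) (hr : ∀ x, ∀ y ∈ C, y * x ∈ C)
    (a : D ⊗[F] R) (ha : a ∈ C) (i : κ) : ι F D R (coef b i a) ∈ C := by
  have := rTensor_mem ((Algebra.linearMap F D) ∘ₗ b.coord i) C hl hr a ha
  convert this using 1
  clear this ha
  induction a using TensorProduct.induction_on with
  | zero => simp
  | add u v hu hv => simp only [map_add, hu, hv]
  | tmul d s => simp [ι, coef, Algebra.algebraMap_eq_smul_one, TensorProduct.smul_tmul]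

lemma coef_mul_left (p : Ideal R) (a g : D ⊗[F] R) (hg : ∀ j, coef b j g ∈ p) (j : κ) :
    coef b j (a * g) ∈ p := by
  rw [← sum_coef b g, Finset.mul_sum, map_sum]
  refine p.sum_mem fun k _ => ?_
  rw [← mul_assoc, coef_mul_ι]
  exact p.mul_mem_right _ (hg k)

lemma coef_mul_right (p : Ideal R) (a g : D ⊗[F] R) (hg : ∀ j, coef b j g ∈ p) (j : κ) :
    coef b j (g * a) ∈ p := by
  rw [← sum_coef b g, Finset.sum_mul, map_sum]
  refine p.sum_mem fun k _ => ?_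
  rw [mul_assoc, ι_comm, ← mul_assoc, coef_mul_ι]
  exact p.mul_mem_right _ (hg k)

variable {n : ℕ} (N : Submodule (D ⊗[F] R) (Fin n → D ⊗[F] R))

/-- The submodule of vectors with all coefficients in `p`. -/
noncomputable def G (n : ℕ) (p : Ideal R) : Submodule (D ⊗[F] R) (Fin n → D ⊗[F] R) where
  carrier := {g | ∀ i j, coef b j (g i) ∈ p}
  add_mem' := fun hx hy i j => by
    rw [Pi.add_apply, map_add]; exact p.add_mem (hx i j) (hy i j)
  zero_mem' := fun i j => by simp
  smul_mem' := fun a x hx i j => coef_mul_left b p a _ (hx i) j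

/-- The ideal of `r` with `r f ∈ N`. -/
noncomputable def colonI (f : Fin n → D ⊗[F] R) : Ideal R where
  carrier := {r | ι F D R r • f ∈ N}
  add_mem' := fun {x y} hx hy => by
    simp only [Set.mem_ofPred_eq, map_add, add_smul] at *; exact N.add_mem hx hy
  zero_mem' := by simp
  smul_mem' := fun c x hx => by
    simp only [Set.mem_ofPred_eq, smul_eq_mul, map_mul, mul_smul] at *; exact N.smul_mem _ hx

lemma mem_colonI {f : Fin n → D ⊗[F] R} {r : R} : r ∈ colonI N f ↔ ι F D R r • f ∈ N := Iff.rfl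

/-- The ideal generated by the coefficients of `h`. -/
noncomputable def J (h : Fin n → D ⊗[F] R) : Ideal R :=
  Ideal.span (Set.range fun q : Fin n × κ => coef b q.2 (h q.1))

lemma semiprime_pow (hN : N.IsSemiprimeSubmodule) (h : Fin n → D ⊗[F] R) (m : ℕ)
    (hm : J b h ^ m ≤ colonI N h) : h ∈ N := by
  induction m with
  | zero =>
    have : (1 : R) ∈ colonI N h := hm (by simp)
    simpa [mem_colonI] using this
  | succ m ih =>
    refine ih fun c hc => ?_
    rw [mem_colonI]
    refine hN _ fun i a => ?_
    have e : ((ι F D R c • h) i * a) • (ι F D R c • h) =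
        ∑ j, (ι F D R c * (b j ⊗ₜ[F] (1 : R)) * a) • (ι F D R (coef b j (h i) * c) • h) := by
      simp only [← mul_smul, ← Finset.sum_smul]
      congr 1
      rw [Pi.smul_apply, smul_eq_mul]
      nth_rw 1 [← sum_coef b (h i)]
      rw [Finset.mul_sum, Finset.sum_mul, Finset.sum_mul]
      refine Finset.sum_congr rfl fun j _ => ?_
      rw [map_mul]
      simp only [mul_assoc]
      rw [← mul_assoc (ι F D R (coef b j (h i))) a, ι_comm _ a, mul_assoc]
    rw [e]
    refine N.sum_mem fun j _ => N.smul_mem _ ?_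
    rw [← mem_colonI]
    apply hm
    rw [pow_succ']
    exact Ideal.mul_mem_mul (Ideal.subset_span ⟨(i, j), rfl⟩) hc

/-- The prime submodule over `p`. -/
noncomputable def P (p : Ideal R) [hp : p.IsPrime] :
    Submodule (D ⊗[F] R) (Fin n → D ⊗[F] R) where
  carrier := {x | ∃ s, s ∉ p ∧ ι F D R s • x ∈ N ⊔ G b n p}
  add_mem' := by
    rintro x y ⟨s, hs, hx⟩ ⟨t, ht, hy⟩
    refine ⟨s * t, fun h => (hp.mem_or_mem h).elim hs ht, ?_⟩
    rw [smul_add]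
    refine Submodule.add_mem _ ?_ ?_
    · rw [mul_comm, map_mul, mul_smul]; exact Submodule.smul_mem _ _ hx
    · rw [map_mul, mul_smul]; exact Submodule.smul_mem _ _ hy
  zero_mem' := ⟨1, hp.one_notMem, by simp⟩
  smul_mem' := by
    rintro a x ⟨s, hs, hx⟩
    refine ⟨s, hs, ?_⟩
    rw [← mul_smul, ι_comm, mul_smul]
    exact Submodule.smul_mem _ _ hx

lemma le_P (p : Ideal R) [hp : p.IsPrime] : N ⊔ G b n p ≤ P b N p :=
  fun x hx => ⟨1, hp.one_notMem, by simpa using hx⟩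

lemma P_prime [FiniteDimensional F D] [Algebra.IsCentral F D] (p : Ideal R) [hp : p.IsPrime] :
    (P b N p).IsPrimeSubmodule := by
  intro a m h
  by_cases ha : ∀ j, coef b j a ∈ p
  · left
    intro m'
    exact le_P b N p (Submodule.mem_sup_right fun i j => coef_mul_right b p _ a ha j)
  · right
    push Not at ha
    obtain ⟨j, hj⟩ := ha
    let C : AddSubgroup (D ⊗[F] R) :=
      { carrier := {y | ∀ x, (y * x) • m ∈ P b N p}
        add_mem' := fun hx hy z => by
          rw [add_mul, add_smul]; exact Submodule.add_mem _ (hx z) (hy z)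
        zero_mem' := fun z => by simp
        neg_mem' := fun hx z => by
          rw [neg_mul, neg_smul]; exact Submodule.neg_mem _ (hx z) }
    have h1 : ι F D R (coef b j a) ∈ C := by
      refine coef_mem b C ?_ ?_ a h j
      · intro x y hy z
        rw [mul_assoc, mul_smul]; exact Submodule.smul_mem _ _ (hy z)
      · intro x y hy z
        rw [mul_assoc]; exact hy _
    obtain ⟨s, hs, h2⟩ := h1 1
    refine ⟨s * coef b j a, fun h => (hp.mem_or_mem h).elim hs hj, ?_⟩
    rwa [map_mul, mul_smul, ← mul_one (ι F D R (coef b j a))]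

lemma notMem_P (hN : N.IsSemiprimeSubmodule) (f : Fin n → D ⊗[F] R) (p : Ideal R)
    [hp : p.IsPrime] (hmin : p ∈ (colonI N f).minimalPrimes) : f ∉ P b N p := by
  rintro ⟨s, hs, hf⟩
  obtain ⟨ν, hν, g, hg, hsf⟩ := Submodule.mem_sup.1 hf
  have key : ∀ x ∈ p, ∃ t, t ∉ p ∧ ∃ k : ℕ, t * x ^ k ∈ colonI N f := by
    intro x hx
    by_contra! hcon
    let M : Submonoid R := p.primeCompl ⊔ Submonoid.powers x
    obtain ⟨q, hq, hIq, hd⟩ := Ideal.exists_le_prime_disjoint (colonI N f) M (by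
      rw [Set.disjoint_left]
      intro y hy hyM
      obtain ⟨t, ht, _, ⟨k, rfl⟩, rfl⟩ := Submonoid.mem_sup.1 hyM
      exact hcon t ht k hy)
    rw [Set.disjoint_left] at hd
    have hqp : q ≤ p := by
      intro y hy
      by_contra hyp
      exact hd hy ((le_sup_left : p.primeCompl ≤ M) hyp)
    exact hd (hmin.2 ⟨hq, hIq⟩ hqp hx)
      ((le_sup_right : Submonoid.powers x ≤ M) (Submonoid.mem_powers x))
  choose t ht k hk using fun q : Fin n × κ => key _ (hg q.1 q.2)
  let τ := ∏ q, t q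
  have hτ : τ ∉ p := by
    intro h
    obtain ⟨q, _, hq⟩ := (hp.prod_mem_iff).1 h
    exact ht q hq
  let I' : Ideal R := Submodule.comap (LinearMap.mulLeft R τ) (colonI N f)
  have hJ : J b g ≤ I'.radical := by
    refine Ideal.span_le.2 ?_
    rintro _ ⟨q, rfl⟩
    refine ⟨k q, ?_⟩
    change τ * _ ∈ colonI N f
    obtain ⟨u, hu⟩ := Finset.dvd_prod_of_mem t (Finset.mem_univ q)
    have : τ = t q * u := hu
    rw [this, mul_right_comm]
    exact Ideal.mul_mem_right _ _ (hk q)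
  obtain ⟨m, hm⟩ := Ideal.exists_pow_le_of_le_radical_of_fg hJ
    (Submodule.fg_span (Set.finite_range _))
  have hh : ι F D R τ • g ∈ N := by
    refine semiprime_pow b N hN _ m fun x hx => ?_
    have hle : J b (ι F D R τ • g) ≤ J b g := by
      refine Ideal.span_le.2 ?_
      rintro _ ⟨q, rfl⟩
      simp only [Pi.smul_apply, smul_eq_mul, coef_ι_mul]
      exact Ideal.mul_mem_left _ _ (Ideal.subset_span ⟨q, rfl⟩)
    have h1 : τ * x ∈ colonI N f := hm (Ideal.pow_right_mono hle m hx)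
    rw [mem_colonI] at h1 ⊢
    have hg' : g = ι F D R s • f - ν := by rw [← hsf]; simp
    rw [hg', ← mul_smul, ← map_mul, smul_sub, ← mul_smul, ι_comm, mul_smul, mul_comm x]
    exact N.sub_mem (N.smul_mem _ h1) (N.smul_mem _ hν)
  have : τ * s ∈ colonI N f := by
    rw [mem_colonI, map_mul, mul_smul, ← hsf, smul_add]
    exact N.add_mem (N.smul_mem _ hν) hh
  exact (hp.mem_or_mem (hmin.1.2 this)).elim hτ hs

end SPT

/-- **Theorem 3.** Let `D` be a finite-dimensional central division algebra over a field `F`,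
`R` a commutative `F`-algebra, and `D_R = D ⊗_F R`.  Every semiprime submodule of `(D_R)^n`
is the intersection of all prime submodules containing it. -/
theorem semiprime_eq_inf_primes_tensor
    (F : Type*) [Field F] (D : Type*) [DivisionRing D] [Algebra F D]
    [FiniteDimensional F D] [Algebra.IsCentral F D]
    (R : Type*) [CommRing R] [Algebra F R] {n : ℕ}
    (N : Submodule (D ⊗[F] R) (Fin n → D ⊗[F] R)) (hN : N.IsSemiprimeSubmodule) :
    N = sInf {P : Submodule (D ⊗[F] R) (Fin n → D ⊗[F] R) | P.IsPrimeSubmodule ∧ N ≤ P} := by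
  refine le_antisymm (le_sInf fun P hP => hP.2) fun f hf => ?_
  by_contra hfN
  have hne : SPT.colonI N f ≠ ⊤ := by
    intro h
    have : (1 : R) ∈ SPT.colonI N f := h ▸ Submodule.mem_top
    rw [SPT.mem_colonI, map_one, one_smul] at this
    exact hfN this
  obtain ⟨p, hp⟩ := Ideal.nonempty_minimalPrimes hne
  have := hp.1.1
  let b := Module.finBasis F D
  exact SPT.notMem_P b N hN f p hp ((Submodule.mem_sInf.1 hf) _
    ⟨SPT.P_prime b N p, le_sup_left.trans (SPT.le_P b N p)⟩)
end

section
/- (Theorem 4) Let F be a field, D a finite-dimensional division algebra over F whose center is F, R a commutative F-algebra, and D_R = D ⊗_F R. Let P be a two-sided prime ideal of D_R and N a submodule of (D_R)^n. Then the intersection of all P-prime submodules of (D_R)^n containing N equals the intersection of all submodules of the form C_{P,u}, with u ∈ (D_R)^n ∖ P^n, that contain N (both intersections taken to be all of (D_R)^n when the respective family is empty). -/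
open TensorProduct

/-- For a *two-sided* ideal `P` of a ring `A` (given as a left ideal `P : Ideal A` which is
also closed under right multiplication) and `u ∈ A^n`, the left submodule
`C_{P,u} = {m ∈ A^n | m 0 * u 0 + ⋯ + m (n-1) * u (n-1) ∈ P}`. -/
def CPu {A : Type*} [Ring A] {n : ℕ} (P : Ideal A) (u : Fin n → A) :
    Submodule A (Fin n → A) where
  carrier := {m | (∑ j, m j * u j) ∈ P}
  add_mem' := by
    intro a b ha hb
    simp only [Set.mem_setOf_eq, Pi.add_apply, add_mul, Finset.sum_add_distrib] at *
    exact add_mem ha hb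
  zero_mem' := by simp
  smul_mem' := by
    intro c m hm
    simp only [Set.mem_setOf_eq, Pi.smul_apply, smul_eq_mul, mul_assoc, ← Finset.mul_sum] at *
    exact Ideal.mul_mem_left _ _ hm

theorem aux_domain {S M : Type*} [CommRing S] [IsDomain S] [AddCommGroup M] [Module S M]
    [Module.Finite S M] (h : ∀ (s : S) (m : M), s • m = 0 → s = 0 ∨ m = 0) (m : M) (hm : m ≠ 0) :
    ∃ g : M →ₗ[S] S, g m ≠ 0 := by
  let K := FractionRing S
  let i := LocalizedModule.mkLinearMap (nonZeroDivisors S) M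
  let : Module K (LocalizedModule (nonZeroDivisors S) M) :=
    inferInstanceAs (Module (Localization (nonZeroDivisors S)) (LocalizedModule (nonZeroDivisors S) M))
  have : IsScalarTower S K (LocalizedModule (nonZeroDivisors S) M) :=
    inferInstanceAs (IsScalarTower S (Localization (nonZeroDivisors S))
      (LocalizedModule (nonZeroDivisors S) M))
  have hi : i m ≠ 0 := by
    intro h0
    obtain ⟨s, hs⟩ := (IsLocalizedModule.eq_zero_iff (nonZeroDivisors S) i).1 h0
    rcases h s m hs with h1 | h1
    · exact nonZeroDivisors.coe_ne_zero s h1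
    · exact hm h1
  obtain ⟨f, hf⟩ : ∃ f : Module.Dual K (LocalizedModule (nonZeroDivisors S) M), f (i m) ≠ 0 := by
    by_contra! hc
    exact hi ((Module.forall_dual_apply_eq_zero_iff K _).1 hc)
  obtain ⟨t, ht⟩ := Module.Finite.fg_top (R := S) (M := M)
  let k : M →ₗ[S] K := (f.restrictScalars S) ∘ₗ i
  obtain ⟨b, hb⟩ := IsLocalization.exist_integer_multiples (nonZeroDivisors S) t (fun x => k x)
  let k' : M →ₗ[S] K := (b : S) • k
  have hk : ∀ x, k' x ∈ LinearMap.range (Algebra.linearMap S K) := by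
    intro x
    have hx : x ∈ Submodule.span S (t : Set M) := ht ▸ Submodule.mem_top
    have : Submodule.span S (t : Set M) ≤ (LinearMap.range (Algebra.linearMap S K)).comap k' := by
      rw [Submodule.span_le]
      intro y hy
      obtain ⟨z, hz⟩ := hb y hy
      exact ⟨z, hz⟩
    exact this hx
  have hinj : Function.Injective (Algebra.linearMap S K) := IsFractionRing.injective S K
  refine ⟨(LinearEquiv.ofInjective _ hinj).symm.toLinearMap ∘ₗ k'.codRestrict _ hk, ?_⟩
  intro h0
  simp only [LinearMap.comp_apply, LinearEquiv.coe_coe, LinearEquiv.map_eq_zero_iff] at h0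
  have h1 : (b : S) • k m = 0 := congrArg Subtype.val h0
  rw [smul_eq_zero] at h1
  rcases h1 with h1 | h1
  · exact nonZeroDivisors.coe_ne_zero b h1
  · exact hf h1

theorem aux_quot {R M : Type*} [CommRing R] [AddCommGroup M] [Module R M]
    [Module.Finite R M] (p : Ideal R) [p.IsPrime] (h0 : ∀ r ∈ p, ∀ m : M, r • m = 0)
    (h : ∀ (s : R) (m : M), s • m = 0 → s ∈ p ∨ m = 0) (m : M) (hm : m ≠ 0) :
    ∃ g : M →ₗ[R] (R ⧸ p), g m ≠ 0 := by
  have ht : Module.IsTorsionBySet R M p := fun x r => h0 r r.2 x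
  let : Module (R ⧸ p) M := ht.module
  have : IsScalarTower R (R ⧸ p) M := ht.isScalarTower
  have : Module.Finite (R ⧸ p) M := Module.Finite.of_restrictScalars_finite R _ _
  obtain ⟨g, hg⟩ := aux_domain (S := R ⧸ p) (M := M) (by
    intro s x hs
    obtain ⟨r, rfl⟩ := Ideal.Quotient.mk_surjective s
    rw [Ideal.Quotient.eq_zero_iff_mem]
    exact h r x hs) m hm
  exact ⟨g.restrictScalars R, hg⟩

theorem aux_density (F : Type*) [Field F] (D : Type*) [DivisionRing D] [Algebra F D]
    [FiniteDimensional F D] [Algebra.IsCentral F D] (R : Type*) [CommRing R] [Algebra F R]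
    (P : Ideal (D ⊗[F] R)) (hP : ∀ a ∈ P, ∀ x : D ⊗[F] R, a * x ∈ P) (f : D →ₗ[F] D) :
    ∀ y ∈ P, f.rTensor R y ∈ P := by
  let : Module (D ⊗[F] Dᵐᵒᵖ) D := TensorProduct.Algebra.module
  have hs : ∀ (a : D) (b : Dᵐᵒᵖ) (x : D), (a ⊗ₜ[F] b) • x = a * (x * b.unop) := fun a b x => rfl
  have key : ∀ t : D ⊗[F] Dᵐᵒᵖ, ∃ f : D →ₗ[F] D, (∀ x, f x = t • x) ∧
      ∀ y ∈ P, f.rTensor R y ∈ P := by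
    intro t
    induction t using TensorProduct.induction_on with
    | zero => exact ⟨0, fun x => (zero_smul (D ⊗[F] Dᵐᵒᵖ) x).symm, by simp⟩
    | tmul a b =>
      refine ⟨LinearMap.mulLeft F a ∘ₗ LinearMap.mulRight F b.unop, fun x => by simp [hs], ?_⟩
      intro y hy
      have : (LinearMap.mulLeft F a ∘ₗ LinearMap.mulRight F b.unop).rTensor R y
          = (a ⊗ₜ 1) * (y * (b.unop ⊗ₜ 1)) := by
        clear hy
        induction y using TensorProduct.induction_on with
        | zero => simp
        | tmul x r => simp
        | add x y hx hy => rw [map_add, hx, hy, add_mul, mul_add]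
      rw [this]
      exact P.mul_mem_left _ (hP _ hy _)
    | add s t hs ht =>
      obtain ⟨f, hf, hf'⟩ := hs
      obtain ⟨g, hg, hg'⟩ := ht
      refine ⟨f + g, fun x => by simp [hf, hg, add_smul], fun y hy => ?_⟩
      rw [LinearMap.rTensor_add]
      exact P.add_mem (hf' y hy) (hg' y hy)
  have : IsSimpleModule (D ⊗[F] Dᵐᵒᵖ) D := by
    rw [isSimpleModule_iff_toSpanSingleton_surjective]
    refine ⟨inferInstance, fun x hx y => ⟨(y * x⁻¹) ⊗ₜ 1, ?_⟩⟩
    simp [hs, hx]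
  have hend : ∀ φ : Module.End (D ⊗[F] Dᵐᵒᵖ) D, ∃ c : F, ∀ x, φ x = c • x := by
    intro φ
    have h1 : ∀ x, φ x = x * φ 1 := fun x => by
      have := φ.map_smul (x ⊗ₜ 1) 1
      simpa [hs] using this
    have h2 : ∀ x, φ x = φ 1 * x := fun x => by
      have := φ.map_smul (1 ⊗ₜ (MulOpposite.op x)) 1
      simpa [hs] using this
    have hc : φ 1 ∈ Subalgebra.center F D := by
      rw [Subalgebra.mem_center_iff]
      intro b
      rw [← h1, ← h2]
    rw [Algebra.IsCentral.center_eq_bot, Algebra.mem_bot] at hc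
    obtain ⟨c, hc⟩ := hc
    exact ⟨c, fun x => by rw [h2, ← hc, Algebra.smul_def]⟩
  let f' : Module.End (Module.End (D ⊗[F] Dᵐᵒᵖ) D) D :=
    { toFun := f
      map_add' := f.map_add
      map_smul' := by
        intro φ x
        obtain ⟨c, hc⟩ := hend φ
        simp [hc] }
  classical
  let b := Module.finBasis F D
  obtain ⟨t, ht⟩ := jacobson_density f' (Finset.univ.image b)
  obtain ⟨g, hg, hg'⟩ := key t
  have : f = g := by
    refine b.ext fun i => ?_
    rw [hg, ← ht _ (by simp)]
    rfl
  rw [this]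
  exact hg'

theorem aux_CPu {A : Type*} [Ring A] {n : ℕ} (P : Ideal A)
    (hP : ∀ a ∈ P, ∀ x : A, a * x ∈ P)
    (hPprime : ∀ x y : A, (∀ a : A, x * a * y ∈ P) → x ∈ P ∨ y ∈ P)
    (u : Fin n → A) (hu : ∃ j, u j ∉ P) :
    (CPu P u).IsPrimeSubmodule ∧ ∀ a : A, (∀ m : Fin n → A, a • m ∈ CPu P u) ↔ a ∈ P := by
  have hmem : ∀ m, m ∈ CPu P u ↔ (∑ j, m j * u j) ∈ P := fun m => Iff.rfl
  have h2 : ∀ a ∈ P, ∀ m : Fin n → A, a • m ∈ CPu P u := by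
    intro a ha m
    rw [hmem]
    refine P.sum_mem fun j _ => ?_
    simp only [Pi.smul_apply, smul_eq_mul, mul_assoc]
    exact hP _ ha _
  refine ⟨fun a m h => ?_, fun a => ⟨fun h => ?_, h2 a⟩⟩
  · rcases hPprime a (∑ j, m j * u j) (fun x => by
      have := h x
      rw [hmem] at this
      simpa only [Pi.smul_apply, smul_eq_mul, mul_assoc, Finset.mul_sum] using this) with h1 | h1
    · exact Or.inl (h2 a h1)
    · exact Or.inr h1
  · obtain ⟨j, hj⟩ := hu
    refine (hPprime a (u j) fun x => ?_).resolve_right hj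
    have := h (Pi.single j x)
    rw [hmem, Finset.sum_eq_single j] at this
    · simpa using this
    · intro k _ hk
      simp [hk]
    · simp

theorem aux_main {R A : Type*} [CommRing R] [Ring A] [Algebra R A] {ι : Type*} [Fintype ι]
    [DecidableEq ι] (b c : ι → A) (hb : Submodule.span R (Set.range b) = ⊤)
    (hc : Submodule.span R (Set.range c) = ⊤) (L : A →ₗ[R] R)
    (hL : ∀ i j, L (b j * c i) = if j = i then 1 else 0)
    (P : Ideal A) (hPne : P ≠ ⊤)
    (hPprime : ∀ x y : A, (∀ a : A, x * a * y ∈ P) → x ∈ P ∨ y ∈ P)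
    (hLP : ∀ y ∈ P, algebraMap R A (L y) ∈ P) {n : ℕ} (Q : Submodule A (Fin n → A))
    (hQ : Q.IsPrimeSubmodule) (hQP : ∀ a : A, (∀ m : Fin n → A, a • m ∈ Q) ↔ a ∈ P)
    (m : Fin n → A) (hm : m ∉ Q) :
    ∃ u : Fin n → A, Q ≤ CPu P u ∧ m ∉ CPu P u := by
  have hmem : ∀ u m : Fin n → A, m ∈ CPu P u ↔ (∑ j, m j * u j) ∈ P := fun u m => Iff.rfl
  let p : Ideal R := P.comap (algebraMap R A)
  have hp : ∀ r, r ∈ p ↔ algebraMap R A r ∈ P := fun r => Iff.rfl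
  have : p.IsPrime := by
    refine ⟨fun h => hPne ?_, fun {r s} h => ?_⟩
    · rw [Ideal.eq_top_iff_one] at h ⊢
      rwa [hp, map_one] at h
    · refine hPprime _ _ fun a => ?_
      rw [Algebra.commutes, mul_assoc, ← map_mul]
      exact P.mul_mem_left _ h
  have : Module.Finite R A := ⟨⟨(Set.finite_range b).toFinset, by simpa using hb⟩⟩
  let Q' : Submodule R (Fin n → A) := Q.restrictScalars R
  obtain ⟨g, hg⟩ := aux_quot (M := (Fin n → A) ⧸ Q') p (by
    intro r hr x
    obtain ⟨x, rfl⟩ := Submodule.Quotient.mk_surjective _ x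
    rw [← Submodule.Quotient.mk_smul, Submodule.Quotient.mk_eq_zero]
    have := (hQP _).2 hr x
    rwa [algebraMap_smul] at this) (by
    intro r x
    obtain ⟨x, rfl⟩ := Submodule.Quotient.mk_surjective _ x
    rw [← Submodule.Quotient.mk_smul, Submodule.Quotient.mk_eq_zero, Submodule.Quotient.mk_eq_zero]
    intro h
    have h : r • x ∈ Q := h
    rcases hQ (algebraMap R A r) x (fun a => by
      rw [Algebra.commutes, mul_smul, algebraMap_smul]
      exact Q.smul_mem _ h) with h1 | h1
    · exact Or.inl ((hQP _).1 h1)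
    · exact Or.inr h1) (Submodule.Quotient.mk m) (by
    rw [Ne, Submodule.Quotient.mk_eq_zero]
    exact hm)
  let G : (Fin n → A) →ₗ[R] (R ⧸ p) := g ∘ₗ Q'.mkQ
  choose r hr using fun (j : Fin n) (k : ι) =>
    Ideal.Quotient.mk_surjective (G (Pi.single j (b k)))
  let u : Fin n → A := fun j => ∑ k, r j k • c k
  have hbu : ∀ i j, L (b i * u j) = r j i := by
    intro i j
    simp [u, Finset.mul_sum, hL]
  let mu : (Fin n → A) →ₗ[R] A := ∑ j, (LinearMap.mulRight R (u j)) ∘ₗ (LinearMap.proj j)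
  have hmu : ∀ x, mu x = ∑ j, x j * u j := by
    intro x
    simp [mu]
  let q : R →ₗ[R] (R ⧸ p) := p.mkQ
  have hG : q ∘ₗ L ∘ₗ mu = G := by
    refine LinearMap.pi_ext' fun j => ?_
    refine LinearMap.ext_on_range hb fun i => ?_
    simp only [LinearMap.comp_apply, LinearMap.coe_single]
    rw [hmu, Finset.sum_eq_single j, Pi.single_eq_same, hbu]
    · exact hr j i
    · intro k _ hk
      simp [hk]
    · simp
  have hG' : ∀ x, G x = 0 ↔ L (∑ j, x j * u j) ∈ p := by
    intro x
    rw [← hG, ← hmu]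
    exact Submodule.Quotient.mk_eq_zero _
  have hexp : ∀ y, y = ∑ i, L (b i * y) • c i := by
    intro y
    have : y ∈ Submodule.span R (Set.range c) := hc ▸ Submodule.mem_top
    obtain ⟨s, rfl⟩ := (Submodule.mem_span_range_iff_exists_fun R).1 this
    simp [Finset.mul_sum, hL]
  refine ⟨u, fun x hx => ?_, fun h => hg ?_⟩
  · rw [hmem, hexp (∑ j, x j * u j)]
    refine P.sum_mem fun i _ => ?_
    have h1 : L (b i * ∑ j, x j * u j) ∈ p := by
      have := (hG' (b i • x)).1 (by
        have : b i • x ∈ Q' := Q.smul_mem _ hx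
        change g (Submodule.Quotient.mk (b i • x)) = 0
        rw [(Submodule.Quotient.mk_eq_zero _).2 this, map_zero])
      simpa [Finset.mul_sum, mul_assoc] using this
    rw [Algebra.smul_def, Algebra.commutes]
    exact P.mul_mem_left _ h1
  · exact (hG' m).2 (hLP _ h)

theorem aux_basis (F : Type*) [Field F] (D : Type*) [DivisionRing D] [Algebra F D]
    [FiniteDimensional F D] : ∃ (l : D →ₗ[F] F)
    (b c : Module.Basis (Fin (Module.finrank F D)) F D),
    ∀ i j, l (b j * c i) = if j = i then 1 else 0 := by
  obtain ⟨l, hl⟩ : ∃ l : Module.Dual F D, l 1 ≠ 0 := by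
    by_contra! hc
    exact one_ne_zero ((Module.forall_dual_apply_eq_zero_iff F (1 : D)).1 hc)
  let B : LinearMap.BilinForm F D := LinearMap.mk₂ F (fun x y => l (y * x))
    (by simp [mul_add]) (by simp) (by simp [add_mul]) (by simp)
  have hB : B.Nondegenerate := by
    refine ⟨fun x hx => ?_, fun x hx => ?_⟩
    · by_contra h
      have := hx x⁻¹
      simp [B, h] at this
      exact hl this
    · by_contra h
      have := hx x⁻¹
      simp [B, h] at this
      exact hl this
  let b := Module.finBasis F D
  exact ⟨l, b, B.dualBasis hB b, fun i j => B.apply_dualBasis_left hB b i j⟩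

/-- **Theorem 4.** Let `D` be a finite-dimensional central division algebra over a field `F`,
`R` a commutative `F`-algebra, `D_R = D ⊗_F R`, and `P` a two-sided prime ideal of `D_R`.
For every submodule `N` of `(D_R)^n`, the intersection of all `P`-prime submodules
containing `N` equals the intersection of all submodules of the form `C_{P,u}`
(`u ∈ (D_R)^n ∖ P^n`) containing `N`. -/
theorem KNP_eq_inf_CPu_tensor
    (F : Type*) [Field F] (D : Type*) [DivisionRing D] [Algebra F D]
    [FiniteDimensional F D] [Algebra.IsCentral F D]
    (R : Type*) [CommRing R] [Algebra F R] {n : ℕ}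
    (P : Ideal (D ⊗[F] R))
    (hPtwoSided : ∀ a ∈ P, ∀ x : D ⊗[F] R, a * x ∈ P)
    (hPne : P ≠ ⊤)
    (hPprime : ∀ x y : D ⊗[F] R, (∀ a : D ⊗[F] R, x * a * y ∈ P) → x ∈ P ∨ y ∈ P)
    (N : Submodule (D ⊗[F] R) (Fin n → D ⊗[F] R)) :
    sInf {Q : Submodule (D ⊗[F] R) (Fin n → D ⊗[F] R) |
        (Q.IsPrimeSubmodule ∧ (∀ a : D ⊗[F] R, (∀ m : Fin n → D ⊗[F] R, a • m ∈ Q) ↔ a ∈ P))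
          ∧ N ≤ Q} =
      sInf {Q : Submodule (D ⊗[F] R) (Fin n → D ⊗[F] R) |
        (∃ u : Fin n → D ⊗[F] R, (∃ j, u j ∉ P) ∧ Q = CPu P u) ∧ N ≤ Q} := by
  apply le_antisymm
  · refine le_sInf ?_
    rintro Q ⟨⟨u, hu, rfl⟩, hN⟩
    exact sInf_le ⟨aux_CPu P hPtwoSided hPprime u hu, hN⟩
  · refine le_sInf ?_
    rintro Q ⟨⟨hQ, hQP⟩, hN⟩ m hm
    by_contra hmQ
    obtain ⟨l, b, c, hlbc⟩ := aux_basis F D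
    let alg : Algebra R (D ⊗[F] R) := Algebra.TensorProduct.rightAlgebra
    have hsm : ∀ (r : R) (x : D ⊗[F] R), r • x = (1 ⊗ₜ r) * x := fun r x => Algebra.smul_def r x
    have hspan : ∀ b : Module.Basis (Fin (Module.finrank F D)) F D,
        Submodule.span R (Set.range fun i => (b i ⊗ₜ[F] (1 : R))) = ⊤ := by
      intro b
      rw [eq_top_iff]
      rintro x -
      induction x using TensorProduct.induction_on with
      | zero => exact Submodule.zero_mem _
      | add x y hx hy => exact Submodule.add_mem _ hx hy
      | tmul d r =>
        rw [← b.sum_repr d, TensorProduct.sum_tmul]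
        refine Submodule.sum_mem _ fun i _ => ?_
        have : (b.repr d i • b i) ⊗ₜ[F] r = (b.repr d i • r) • (b i ⊗ₜ[F] (1 : R)) := by
          rw [hsm]
          simp [TensorProduct.smul_tmul]
        rw [this]
        exact Submodule.smul_mem _ _ (Submodule.subset_span ⟨i, rfl⟩)
    let L0 : D ⊗[F] R →ₗ[F] R := (TensorProduct.lid F R).toLinearMap ∘ₗ l.rTensor R
    have hL0 : ∀ d r, L0 (d ⊗ₜ r) = l d • r := fun d r => by simp [L0]
    let L : D ⊗[F] R →ₗ[R] R :=
      { toFun := L0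
        map_add' := L0.map_add
        map_smul' := by
          intro r x
          rw [hsm]
          induction x using TensorProduct.induction_on with
          | zero => simp
          | add x y hx hy => rw [mul_add, map_add, map_add, hx, hy, smul_add]
          | tmul d s => simp [hL0] }
    have hL : ∀ d r, L (d ⊗ₜ r) = l d • r := hL0
    have hLP : ∀ y ∈ P, algebraMap R (D ⊗[F] R) (L y) ∈ P := by
      intro y hy
      have h1 := aux_density F D R P hPtwoSided (Algebra.linearMap F D ∘ₗ l) y hy
      have h2 : ∀ y, (Algebra.linearMap F D ∘ₗ l).rTensor R y
          = algebraMap R (D ⊗[F] R) (L y) := by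
        intro y
        induction y using TensorProduct.induction_on with
        | zero => simp
        | add x y hx hy => rw [map_add, map_add, map_add, hx, hy]
        | tmul d s =>
          rw [hL, Algebra.TensorProduct.right_algebraMap_apply]
          simp [Algebra.algebraMap_eq_smul_one, TensorProduct.smul_tmul]
      rwa [h2] at h1
    obtain ⟨u, hu, hmu⟩ := aux_main (R := R) (fun i => b i ⊗ₜ[F] (1 : R))
      (fun i => c i ⊗ₜ[F] (1 : R)) (hspan b) (hspan c) L (by
        intro i j
        rw [Algebra.TensorProduct.tmul_mul_tmul, hL, hlbc]
        split_ifs <;> simp) P hPne hPprime hLP Q hQ hQP m hmQ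
    refine hmu (Submodule.mem_sInf.1 hm (CPu P u) ⟨⟨u, ?_, rfl⟩, hN.trans hu⟩)
    by_contra! hc
    exact hmu (P.sum_mem fun j _ => P.mul_mem_left _ (hc j))
end

section
/- (Proposition 1, claim (3)) Let R be a commutative ring, p a prime ideal of R with p ≠ R, and N a submodule of R^n such that (N : R^n) ⊆ p. Then the set K := {m ∈ R^n | there exists c ∈ R ∖ p with c·m ∈ N + p·R^n} is a p-prime submodule of R^n containing N, and K is contained in every p-prime submodule of R^n that contains N (i.e., K is the smallest p-prime submodule containing N). -/
/-- A submodule `K` of `R^n` is `p`-*prime* if it is prime and `(K : R^n) = p`. -/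
def Submodule.IsPPrime {R : Type*} [CommRing R] {n : ℕ}
    (K : Submodule R (Fin n → R)) (p : Ideal R) : Prop :=
  K.IsPrimeSubmodule ∧ ∀ a : R, (∀ m : Fin n → R, a • m ∈ K) ↔ a ∈ p

theorem det_aux {R : Type*} [CommRing R] {n : ℕ}
    (p : Ideal R) (hp : p.IsPrime)
    (N : Submodule R (Fin n → R))
    (hNp : ∀ a : R, (∀ m : Fin n → R, a • m ∈ N) → a ∈ p) (b : R)
    (hb : ∀ i : Fin n, b • (Pi.single i 1 : Fin n → R) ∈
      N ⊔ Submodule.pi Set.univ (fun _ : Fin n => p)) : b ∈ p := by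
  have h : ∀ i : Fin n, ∃ y ∈ N, ∀ j, b • (Pi.single i 1 : Fin n → R) j - y j ∈ p := by
    intro i
    obtain ⟨y, hy, z, hz, hyz⟩ := Submodule.mem_sup.1 (hb i)
    refine ⟨y, hy, fun j => ?_⟩
    have h1 := congrFun hyz j
    simp only [Pi.add_apply, Pi.smul_apply] at h1
    rw [← h1, add_sub_cancel_left]
    exact (Submodule.mem_pi.1 hz) j (Set.mem_univ j)
  choose B hBN hBp using h
  have hdet : (Matrix.of B).det ∈ p := by
    apply hNp
    intro m
    have h2 : (Matrix.of B).det • m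
        = Matrix.vecMul (Matrix.vecMul m (Matrix.of B).adjugate) (Matrix.of B) := by
      rw [Matrix.vecMul_vecMul, Matrix.adjugate_mul, Matrix.vecMul_smul, Matrix.vecMul_one]
    rw [h2, Matrix.vecMul_eq_sum]
    exact Submodule.sum_mem _ fun j _ => N.smul_mem _ (hBN j)
  have hmap : (Ideal.Quotient.mk p).mapMatrix (Matrix.of B)
      = (Ideal.Quotient.mk p b) • (1 : Matrix (Fin n) (Fin n) (R ⧸ p)) := by
    ext i j
    have h3 := (Ideal.Quotient.eq.2 (hBp i j)).symm
    simp only [RingHom.mapMatrix_apply, Matrix.map_apply, Matrix.of_apply, Matrix.smul_apply]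
    rw [h3, smul_eq_mul, smul_eq_mul, map_mul]
    congr 1
    by_cases hij : i = j
    · subst hij; simp
    · simp [Matrix.one_apply_ne hij, Pi.single_eq_of_ne (Ne.symm hij)]
  have h4 := Ideal.Quotient.eq_zero_iff_mem.2 hdet
  rw [RingHom.map_det, hmap, Matrix.det_smul, Matrix.det_one, mul_one, ← map_pow,
    Ideal.Quotient.eq_zero_iff_mem] at h4
  exact hp.mem_of_pow_mem _ h4

/-- **Proposition 1, claim (3).** Let `p ≠ R` be a prime ideal of the commutative ring `R`
and `N ≤ R^n` a submodule with `(N : R^n) ⊆ p`.  Then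
`K = {m | ∃ c ∉ p, c • m ∈ N + p·R^n}` is the smallest `p`-prime submodule containing `N`. -/
theorem smallest_pPrime_submodule {R : Type*} [CommRing R] {n : ℕ}
    (p : Ideal R) (hp : p.IsPrime)
    (N : Submodule R (Fin n → R))
    (hNp : ∀ a : R, (∀ m : Fin n → R, a • m ∈ N) → a ∈ p) :
    ∃ K : Submodule R (Fin n → R),
      (K : Set (Fin n → R)) =
          {m | ∃ c : R, c ∉ p ∧ c • m ∈ N ⊔ Submodule.pi Set.univ (fun _ : Fin n => p)} ∧
        K.IsPPrime p ∧ N ≤ K ∧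
        ∀ Q : Submodule R (Fin n → R), Q.IsPPrime p → N ≤ Q → K ≤ Q := by
  set S := N ⊔ Submodule.pi Set.univ (fun _ : Fin n => p) with hS
  have hpS : ∀ a ∈ p, ∀ m : Fin n → R, a • m ∈ S := fun a ha m =>
    (le_sup_right : _ ≤ S) (Submodule.mem_pi.2 fun i _ => p.mul_mem_right _ ha)
  have h1p : (1 : R) ∉ p := fun h => hp.ne_top ((Ideal.eq_top_iff_one p).2 h)
  have hmul : ∀ {c d : R}, c ∉ p → d ∉ p → c * d ∉ p := fun hc hd h =>
    (hp.mem_or_mem h).elim hc hd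
  let K : Submodule R (Fin n → R) :=
    { carrier := {m | ∃ c : R, c ∉ p ∧ c • m ∈ S}
      zero_mem' := ⟨1, h1p, by simp⟩
      add_mem' := by
        rintro x y ⟨c, hc, hx⟩ ⟨d, hd, hy⟩
        refine ⟨c * d, hmul hc hd, ?_⟩
        rw [smul_add]
        refine S.add_mem ?_ ?_
        · rw [mul_comm, mul_smul]; exact S.smul_mem _ hx
        · rw [mul_smul]; exact S.smul_mem _ hy
      smul_mem' := by
        rintro a x ⟨c, hc, hx⟩
        exact ⟨c, hc, by rw [smul_comm]; exact S.smul_mem _ hx⟩ }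
  have hK : ∀ m, m ∈ K ↔ ∃ c : R, c ∉ p ∧ c • m ∈ S := fun m => Iff.rfl
  have hpK : ∀ a ∈ p, ∀ m : Fin n → R, a • m ∈ K := fun a ha m =>
    (hK _).2 ⟨1, h1p, by rw [one_smul]; exact hpS a ha m⟩
  refine ⟨K, rfl, ⟨?_, fun a => ⟨fun h => ?_, hpK a⟩⟩, ?_, ?_⟩
  · intro a m h
    by_cases ha : a ∈ p
    · exact Or.inl (hpK a ha)
    · right
      obtain ⟨c, hc, h⟩ := (hK _).1 (h 1)
      rw [mul_one, ← mul_smul] at h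
      exact (hK _).2 ⟨c * a, hmul hc ha, h⟩
  · have h' := fun i : Fin n => (hK _).1 (h (Pi.single i 1))
    choose c hc hcS using h'
    have h5 : (∏ i, c i) * a ∈ p := by
      refine det_aux p hp N hNp _ fun i => ?_
      obtain ⟨d, hd⟩ := Finset.dvd_prod_of_mem c (Finset.mem_univ i)
      rw [hd, mul_comm (c i), mul_assoc, mul_smul, mul_smul]
      exact S.smul_mem _ (hcS i)
    refine (hp.mem_or_mem h5).resolve_left fun h6 => ?_
    obtain ⟨i, -, hi⟩ := (hp.prod_mem_iff).1 h6
    exact hc i hi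
  · intro x hx
    exact (hK _).2 ⟨1, h1p, by rw [one_smul]; exact (le_sup_left : N ≤ S) hx⟩
  · intro Q hQ hNQ m hm
    obtain ⟨c, hc, hm⟩ := (hK _).1 hm
    have hSQ : S ≤ Q := by
      refine sup_le hNQ fun z hz => ?_
      have hz' := Submodule.mem_pi.1 hz
      rw [pi_eq_sum_univ' z]
      exact Submodule.sum_mem _ fun i _ => (hQ.2 (z i)).2 (hz' i (Set.mem_univ i)) _
    refine (hQ.1 c m fun x => ?_).resolve_left fun h => hc ((hQ.2 c).1 h)
    rw [mul_comm, mul_smul]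
    exact Q.smul_mem _ (hSQ hm)
end

section
/- (Proposition 2) Let A be a ring with involution * and let N be a submodule of the left A-module A^n. Let I be the left ideal of M_n(A) corresponding to N, i.e., I = {F ∈ M_n(A) | every row of F lies in N}, where M_n(A) carries the conjugate-transpose involution [a_{ij}]* = [a_{ji}*]. Then N is a real submodule of A^n if and only if I is a real left ideal of M_n(A). -/
open Matrix

/-- A submodule `N` of `A^n`, for a ring `A` with involution `star`, is *real* if whenever
`f 0, …, f (m-1) ∈ A^n` satisfy `∑ i, star (f i j) • f i ∈ N` for every coordinate `j`,
each `f i` lies in `N`. -/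
def Submodule.IsRealSubmoduleStar {A : Type*} [Ring A] [StarRing A] {n : ℕ}
    (N : Submodule A (Fin n → A)) : Prop :=
  ∀ (m : ℕ) (f : Fin m → (Fin n → A)),
    (∀ j, (∑ i, star (f i j) • f i) ∈ N) → ∀ i, f i ∈ N

/-- A left ideal `I` of the matrix ring `Mₙ(A)`, with the conjugate-transpose involution
`ᴴ`, is *real* if whenever `(M 0)ᴴ * M 0 + ⋯ + (M (k-1))ᴴ * M (k-1) ∈ I`, each `M i ∈ I`.
(In Mathlib, `Ideal` means left ideal.) -/
def Ideal.IsRealLeftIdealH {A : Type*} [Ring A] [StarRing A] {n : ℕ}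
    (I : Ideal (Matrix (Fin n) (Fin n) A)) : Prop :=
  ∀ (k : ℕ) (M : Fin k → Matrix (Fin n) (Fin n) A),
    (∑ i, (M i)ᴴ * M i) ∈ I → ∀ i, M i ∈ I

/-- **Proposition 2.** Let `A` be a ring with involution, `N ≤ A^n` a submodule, and
`I` the left ideal of `Mₙ(A)` consisting of all matrices whose rows all lie in `N`.
Then `N` is real iff `I` is real. -/
theorem real_submodule_iff_real_matrix_ideal {A : Type*} [Ring A] [StarRing A] {n : ℕ}
    (N : Submodule A (Fin n → A)) (I : Ideal (Matrix (Fin n) (Fin n) A))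
    (hI : ∀ F : Matrix (Fin n) (Fin n) A, F ∈ I ↔ ∀ i, (fun j => F i j) ∈ N) :
    N.IsRealSubmoduleStar ↔ I.IsRealLeftIdealH := by
  have key : ∀ (k : ℕ) (M : Fin k → Matrix (Fin n) (Fin n) A) (j : Fin n),
      (fun c => (∑ i, (M i)ᴴ * M i) j c) = ∑ i, ∑ l, star (M i l j) • (fun c => M i l c) := by
    intro k M j
    funext c
    simp [Matrix.sum_apply, Matrix.mul_apply, Finset.sum_apply]
  constructor
  · intro hN k M hM i
    rw [hI] at hM ⊢
    intro l
    have h := hN (k * n) (fun p => fun c => M (finProdFinEquiv.symm p).1 (finProdFinEquiv.symm p).2 c)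
      (by
        intro j
        have h1 := hM j
        rw [key, ← Fintype.sum_prod_type' (f := fun i l => star (M i l j) • (fun c => M i l c))] at h1
        rw [← finProdFinEquiv.symm.sum_comp] at h1
        exact h1) (finProdFinEquiv (i, l))
    simpa using h
  · intro hR m f hf i
    rcases n with _ | n
    · rw [Subsingleton.elim (f i) 0]
      exact N.zero_mem
    · have h := hR m (fun i => Matrix.of fun r c => if r = 0 then f i c else 0)
        (by
          rw [hI]
          intro j
          rw [key]
          convert hf j using 2 with i
          rw [Finset.sum_eq_single 0]
          · simp
          · intro b _ hb
            simp [hb]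
          · simp) i
      rw [hI] at h
      simpa using h 0
end

section
/- (Proposition 3, claim (2)) Let F be a field, D a finite-dimensional division algebra over F whose center is F, R a commutative F-algebra, and D_R = D ⊗_F R. Let N be a D_R-submodule of M = (D_R)^n. Then N is a prime submodule of M as a D_R-module if and only if N, viewed by restriction of scalars as an R-submodule of M, is a prime submodule of M as an R-module (i.e., for every r ∈ R and m ∈ M with r·m ∈ N, either r·M ⊆ N or m ∈ N). -/
open TensorProduct

theorem aux_mulLeftRight_surjective
    (F : Type*) [Field F] (D : Type*) [DivisionRing D] [Algebra F D]
    [FiniteDimensional F D] [Algebra.IsCentral F D] :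
    Function.Surjective (AlgHom.mulLeftRight F D) := by
  classical
  intro φ
  let S : Subalgebra F (Module.End F D) := (AlgHom.mulLeftRight F D).range
  have hmem : ∀ a b : D, ∃ s : S, ∀ x : D, s • x = a * x * b := fun a b =>
    ⟨⟨AlgHom.mulLeftRight F D (a ⊗ₜ MulOpposite.op b), ⟨_, rfl⟩⟩, fun x => by
      change AlgHom.mulLeftRight F D (a ⊗ₜ MulOpposite.op b) x = _
      simp⟩
  have hsimple : IsSimpleModule S D := by
    rw [isSimpleModule_iff_toSpanSingleton_surjective]
    refine ⟨inferInstance, fun m hm y => ?_⟩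
    obtain ⟨s, hs⟩ := hmem (y * m⁻¹) 1
    refine ⟨s, ?_⟩
    rw [LinearMap.toSpanSingleton_apply, hs]
    simp [hm]
  have hcent : ∀ g : Module.End S D, ∃ c : F, ∀ x, g x = c • x := by
    intro g
    have h1 : ∀ x, g x = x * g 1 := fun x => by
      obtain ⟨s, hs⟩ := hmem x 1
      have := g.map_smul s 1
      rw [hs, hs] at this
      simpa using this
    have h2 : ∀ x, g x = g 1 * x := fun x => by
      obtain ⟨s, hs⟩ := hmem 1 x
      have := g.map_smul s 1
      rw [hs, hs] at this
      simpa using this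
    have h3 : g 1 ∈ Subalgebra.center F D := by
      rw [Subalgebra.mem_center_iff]
      intro b
      rw [← h1, ← h2]
    obtain ⟨c, hc⟩ := Algebra.IsCentral.out h3
    refine ⟨c, fun x => ?_⟩
    rw [h2, ← hc, Algebra.smul_def]
    rfl
  let f : Module.End (Module.End S D) D :=
    { toFun := φ
      map_add' := φ.map_add
      map_smul' := fun g x => by
        obtain ⟨c, hc⟩ := hcent g
        change φ (g x) = g (φ x)
        rw [hc, hc, φ.map_smul] }
  let b := Module.finBasis F D
  obtain ⟨r, hr⟩ := jacobson_density (R := S) (M := D) f (Finset.univ.image b)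
  obtain ⟨t, ht⟩ := r.2
  refine ⟨t, b.ext fun i => ?_⟩
  have := hr (b i) (by simp)
  change φ (b i) = (r : Module.End F D) (b i) at this
  rw [this, ← ht]
  rfl

theorem aux_rTensor_smul_mem
    (F : Type*) [Field F] (D : Type*) [DivisionRing D] [Algebra F D]
    (R : Type*) [CommRing R] [Algebra F R] {n : ℕ}
    (N : Submodule (D ⊗[F] R) (Fin n → D ⊗[F] R)) (a : D ⊗[F] R) (m : Fin n → D ⊗[F] R)
    (h : ∀ x, (a * x) • m ∈ N) (t : D ⊗[F] Dᵐᵒᵖ) :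
    ((AlgHom.mulLeftRight F D t).rTensor R a) • m ∈ N := by
  induction t using TensorProduct.induction_on with
  | zero => simp
  | add x y hx hy =>
    rw [map_add, LinearMap.rTensor_add, LinearMap.add_apply, add_smul]
    exact N.add_mem hx hy
  | tmul y z =>
    have key : (AlgHom.mulLeftRight F D (y ⊗ₜ z)).rTensor R a
        = (y ⊗ₜ[F] (1 : R)) * (a * (z.unop ⊗ₜ[F] (1 : R))) := by
      clear h
      induction a using TensorProduct.induction_on with
      | zero => simp
      | add p q hp hq => rw [map_add, hp, hq, add_mul, mul_add]
      | tmul d r => simp [mul_assoc]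
    rw [key, mul_smul]
    exact N.smul_mem _ (h _)

/-- **Proposition 3, claim (2).** Let `D` be a finite-dimensional central division algebra
over a field `F`, `R` a commutative `F`-algebra and `D_R = D ⊗_F R`.  A `D_R`-submodule `N`
of `M = (D_R)^n` is prime as a `D_R`-submodule iff it is prime as an `R`-submodule of `M`
(where `r ∈ R` acts on `M` through the element `1 ⊗ r` of `D_R`), i.e. iff for every
`r ∈ R` and `m ∈ M` with `r • m ∈ N`, either `r • M ⊆ N` or `m ∈ N`. -/
theorem primeSubmodule_iff_prime_restrictScalars
    (F : Type*) [Field F] (D : Type*) [DivisionRing D] [Algebra F D]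
    [FiniteDimensional F D] [Algebra.IsCentral F D]
    (R : Type*) [CommRing R] [Algebra F R] {n : ℕ}
    (N : Submodule (D ⊗[F] R) (Fin n → D ⊗[F] R)) :
    N.IsPrimeSubmodule ↔
      (∀ (r : R) (m : Fin n → D ⊗[F] R),
        ((1 : D) ⊗ₜ[F] r) • m ∈ N →
          (∀ m' : Fin n → D ⊗[F] R, ((1 : D) ⊗ₜ[F] r) • m' ∈ N) ∨ m ∈ N) := by
  classical
  constructor
  · intro hN r m hm
    refine hN _ m fun x => ?_
    have hc : ((1 : D) ⊗ₜ[F] r) * x = x * ((1 : D) ⊗ₜ[F] r) := by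
      induction x using TensorProduct.induction_on with
      | zero => simp
      | add p q hp hq => rw [mul_add, add_mul, hp, hq]
      | tmul d s => simp [mul_comm]
    rw [hc, mul_smul]
    exact N.smul_mem _ hm
  · intro hN a m h
    by_cases hm : m ∈ N
    · exact Or.inr hm
    left
    intro m'
    let b := Module.finBasis F D
    obtain ⟨c, hc⟩ := TensorProduct.eq_repr_basis_left b a
    have hi : ∀ i, ((1 : D) ⊗ₜ[F] c i) • m ∈ N := by
      intro i
      obtain ⟨t, ht⟩ := aux_mulLeftRight_surjective F D ((b.coord i).smulRight (1 : D))
      have := aux_rTensor_smul_mem F D R N a m h t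
      rw [ht, ← hc] at this
      have e : (((b.coord i).smulRight (1 : D)).rTensor R) (c.sum fun i n ↦ b i ⊗ₜ n)
          = (1 : D) ⊗ₜ[F] c i := by
        rw [Finsupp.sum_fintype _ _ (by simp), map_sum, Finset.sum_eq_single i]
        · simp
        · intro j _ hj
          simp [Finsupp.single_eq_of_ne hj.symm]
        · simp
      rwa [e] at this
    rw [← hc, Finsupp.sum_fintype _ _ (by simp), Finset.sum_smul]
    refine N.sum_mem fun i _ => ?_
    have e : b i ⊗ₜ[F] c i = (b i ⊗ₜ[F] (1 : R)) * ((1 : D) ⊗ₜ[F] c i) := by simp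
    rw [e, mul_smul]
    exact N.smul_mem _ ((hN _ _ (hi i)).resolve_right hm m')
end

section
/- (Lemma 2, quaternionic form) Let R be a commutative ℝ-algebra and for an ideal J of R let Q(J) denote the two-sided ideal of the quaternion algebra ℍ ⊗_ℝ R (quaternions with components in R, with involution given by quaternionic conjugation, trivial on R) consisting of all quaternions whose four components lie in J. Let I be an ideal of R such that Q(I) is real, i.e., w₁*w₁ + ⋯ + w_k*w_k ∈ Q(I) implies w₁, …, w_k ∈ Q(I). If p is a prime ideal of R that is minimal among the prime ideals of R containing I, then Q(p) is real. -/
/-- For an ideal `J` of a commutative ring `R`, the set `Q(J)` of quaternions with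
components in `R` all four of whose components lie in `J`; it is a two-sided ideal of
`ℍ ⊗_ℝ R = Quaternion R`. -/
def quatIdeal {R : Type*} [CommRing R] (J : Ideal R) : Set (Quaternion R) :=
  {q | q.re ∈ J ∧ q.imI ∈ J ∧ q.imJ ∈ J ∧ q.imK ∈ J}

/-- A set `P` of quaternions over `R` is a *real* (two-sided) ideal if whenever
`star (w 0) * w 0 + ⋯ + star (w (k-1)) * w (k-1) ∈ P`, each `w i ∈ P`.
(Here `star` is quaternionic conjugation, trivial on `R`.) -/
def IsRealQuatSet {R : Type*} [CommRing R] (P : Set (Quaternion R)) : Prop :=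
  ∀ (k : ℕ) (w : Fin k → Quaternion R), (∑ i, star (w i) * w i) ∈ P → ∀ i, w i ∈ P

lemma sum_star_mul_self_aux {R : Type*} [CommRing R] (k : ℕ) (w : Fin k → Quaternion R) :
    (∑ i, star (w i) * w i) = ((∑ i, Quaternion.normSq (w i) : R) : Quaternion R) := by
  simp_rw [Quaternion.star_mul_self]
  exact (map_sum (algebraMap R (Quaternion R)) (fun i => Quaternion.normSq (w i)) _).symm

lemma coe_mem_quatIdeal_aux {R : Type*} [CommRing R] (J : Ideal R) (r : R) :
    (r : Quaternion R) ∈ quatIdeal J ↔ r ∈ J := by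
  simp [quatIdeal]

/-- **Lemma 2 (quaternionic form).** Let `R` be a commutative `ℝ`-algebra and `I` an ideal
of `R` such that the two-sided ideal `Q(I)` of `Quaternion R` is real.  If `p` is a prime
ideal of `R` minimal among primes containing `I`, then `Q(p)` is real. -/
theorem quatIdeal_minimalPrime_real
    (R : Type*) [CommRing R] [Algebra ℝ R] (I : Ideal R)
    (hI : IsRealQuatSet (quatIdeal I))
    (p : Ideal R) (hp : p.IsPrime) (hIp : I ≤ p)
    (hmin : ∀ q : Ideal R, q.IsPrime → I ≤ q → q ≤ p → q = p) :
    IsRealQuatSet (quatIdeal p) := by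
  intro k w hw
  rw [sum_star_mul_self_aux, coe_mem_quatIdeal_aux] at hw
  have hIr : ∀ (k : ℕ) (w : Fin k → Quaternion R), (∑ i, Quaternion.normSq (w i)) ∈ I →
      ∀ i, w i ∈ quatIdeal I := by
    intro k w h
    apply hI
    rwa [sum_star_mul_self_aux, coe_mem_quatIdeal_aux]
  have hsq : ∀ a : R, a ^ 2 ∈ I → a ∈ I := by
    intro a ha
    have := hIr 1 (fun _ => (a : Quaternion R)) (by simpa [Quaternion.normSq_coe] using ha) 0
    rwa [coe_mem_quatIdeal_aux] at this
  have hrad : I.IsRadical := by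
    have key : ∀ (n : ℕ) (a : R), a ^ (2 ^ n) ∈ I → a ∈ I := by
      intro n
      induction n with
      | zero => intro a ha; simpa using ha
      | succ n ih =>
        intro a ha
        apply ih
        apply hsq
        rwa [← pow_mul, ← pow_succ]
    rintro a ⟨n, hn⟩
    exact key n a (I.pow_mem_of_pow_mem hn n.lt_two_pow_self.le)
  set s := ∑ i, Quaternion.normSq (w i) with hs
  have hex : ∃ t, t ∉ p ∧ t * s ∈ I := by
    by_contra! hcon
    have hdis : Disjoint (I : Set R) ((p.primeCompl ⊔ Submonoid.powers s : Submonoid R) : Set R) := by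
      rw [Set.disjoint_left]
      intro x hx hxM
      obtain ⟨t, ht, y, ⟨n, rfl⟩, rfl⟩ := Submonoid.mem_sup.1 hxM
      apply hcon t ht
      apply hrad
      refine ⟨n + 1, ?_⟩
      have : (t * s) ^ (n + 1) = (t * s ^ n) * (t ^ n * s) := by ring
      rw [this]
      exact I.mul_mem_right _ hx
    obtain ⟨q, hq, hIq, hqd⟩ := Ideal.exists_le_prime_disjoint I _ hdis
    rw [Set.disjoint_left] at hqd
    have hqp : q ≤ p := by
      intro x hx
      by_contra hxp
      exact hqd hx ((le_sup_left : p.primeCompl ≤ p.primeCompl ⊔ Submonoid.powers s) hxp)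
    have := hmin q hq hIq hqp
    subst this
    exact hqd hw ((le_sup_right : Submonoid.powers s ≤ q.primeCompl ⊔ Submonoid.powers s)
      (Submonoid.mem_powers s))
  obtain ⟨t, ht, hts⟩ := hex
  intro i
  have h := hIr k (fun i => t • w i) (by
    simp_rw [Quaternion.normSq_smul]
    rw [← Finset.mul_sum, ← hs, pow_two, mul_assoc]
    exact I.mul_mem_left _ hts) i
  obtain ⟨h1, h2, h3, h4⟩ := h
  have hc : ∀ x, t * x ∈ I → x ∈ p := fun x hx => (hp.mem_or_mem (hIp hx)).resolve_left ht
  exact ⟨hc _ (by simpa using h1), hc _ (by simpa using h2), hc _ (by simpa using h3),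
    hc _ (by simpa using h4)⟩
end
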